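/- arXiv:2204.00995 — 5 statements merged into one kernel-verified Lean document; each statement's English description precedes it below -/
import Mathlib

section
/- Let c : Fin n → Fin s be an equitable partition of a matrix-weighted signed graph with weight matrices 𝒜, block Laplacian L, and characteristic matrix P_π. Define the quotient Laplacian L_π ∈ ℝ^{(s·d)×(s·d)} blockwise by: for i, j ∈ Fin s and any representative r with c r = i, (L_π)_{ij} = −Σ_{t : c t = j} 𝒜 r t when i ≠ j, and (L_π)_{ii} = (Σ_t |𝒜 r t|) − Σ_{t : c t = i} 𝒜 r t (these blocks are independent of the choice of representative r by equitability). Then L · P_π = P_π · L_π, and consequently the column space of P_π (the range of the linear map x ↦ P_π.mulVec x) is invariant under the linear map x ↦ L.mulVec x. -/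
open Matrix

/-- Characteristic matrix of a partition `c : Fin n → Fin s`, with `d × d` identity
blocks at positions `(i, c i)` and zero blocks elsewhere. -/
noncomputable def charM (n s d : ℕ) (c : Fin n → Fin s) :
    Matrix (Fin n × Fin d) (Fin s × Fin d) ℝ :=
  fun ia jb => if c ia.1 = jb.1 ∧ ia.2 = jb.2 then 1 else 0

/-- Lemma 1: for an equitable partition of a matrix-weighted signed graph,
`L · P_π = P_π · L_π` and the column space of `P_π` is `L`-invariant. -/
theorem lemma1_quotient_commutation {n s d : ℕ}
    (𝒜 : Fin n → Fin n → Matrix (Fin d) (Fin d) ℝ)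
    (σ : Fin n → Fin n → ℝ)
    (hAdiag : ∀ i, 𝒜 i i = 0)
    (hAsym : ∀ i j, 𝒜 i j = 𝒜 j i)
    (hAsymEach : ∀ i j, (𝒜 i j)ᵀ = 𝒜 i j)
    (hσsym : ∀ i j, σ i j = σ j i)
    (hσval : ∀ i j, σ i j = 1 ∨ σ i j = -1)
    (hpsd : ∀ i j, (σ i j • 𝒜 i j).PosSemidef)
    (c : Fin n → Fin s) (hc : Function.Surjective c)
    (hEP : ∀ r r', c r = c r' → ∀ j : Fin s,
      (∑ t ∈ Finset.univ.filter (fun t => c t = j), 𝒜 r t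
        = ∑ t ∈ Finset.univ.filter (fun t => c t = j), 𝒜 r' t) ∧
      (∑ t ∈ Finset.univ.filter (fun t => c t = j), σ r t • 𝒜 r t
        = ∑ t ∈ Finset.univ.filter (fun t => c t = j), σ r' t • 𝒜 r' t))
    (L : Matrix (Fin n × Fin d) (Fin n × Fin d) ℝ)
    (hL : ∀ i j a b, L (i, a) (j, b) =
      if i = j then (∑ k, σ i k • 𝒜 i k) a b else (-𝒜 i j) a b)
    (rep : Fin s → Fin n) (hrep : ∀ i, c (rep i) = i)
    (Lπ : Matrix (Fin s × Fin d) (Fin s × Fin d) ℝ)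
    (hLπ : ∀ i j a b, Lπ (i, a) (j, b) =
      if i = j then
        ((∑ t, σ (rep i) t • 𝒜 (rep i) t)
          - ∑ t ∈ Finset.univ.filter (fun t => c t = i), 𝒜 (rep i) t) a b
      else (-(∑ t ∈ Finset.univ.filter (fun t => c t = j), 𝒜 (rep i) t)) a b) :
    L * charM n s d c = charM n s d c * Lπ ∧
      Submodule.map L.mulVecLin (LinearMap.range (charM n s d c).mulVecLin)
        ≤ LinearMap.range (charM n s d c).mulVecLin := by
  have hD : ∀ r r', c r = c r' → ∑ k, σ r k • 𝒜 r k = ∑ k, σ r' k • 𝒜 r' k := by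
    intro r r' h
    rw [← Finset.sum_fiberwise Finset.univ c (fun k => σ r k • 𝒜 r k),
      ← Finset.sum_fiberwise Finset.univ c (fun k => σ r' k • 𝒜 r' k)]
    exact Finset.sum_congr rfl (fun j _ => (hEP r r' h j).2)
  have hL' : ∀ i j a b, L (i, a) (j, b) =
      (if i = j then (∑ k, σ i k • 𝒜 i k) a b else 0) - 𝒜 i j a b := by
    intro i j a b
    rw [hL]
    by_cases h : i = j
    · subst h
      simp [hAdiag]
    · simp [h]
  have key : L * charM n s d c = charM n s d c * Lπ := by
    ext ⟨i, a⟩ ⟨j, b⟩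
    have h1 : (L * charM n s d c) (i, a) (j, b)
        = ∑ t ∈ Finset.univ.filter (fun t => c t = j), L (i, a) (t, b) := by
      rw [Matrix.mul_apply, Fintype.sum_prod_type, Finset.sum_filter]
      refine Finset.sum_congr rfl (fun t _ => ?_)
      by_cases h : c t = j <;> simp [charM, h]
    have h2 : (charM n s d c * Lπ) (i, a) (j, b) = Lπ (c i, a) (j, b) := by
      rw [Matrix.mul_apply, Fintype.sum_prod_type, Finset.sum_eq_single (c i)]
      · simp [charM]
      · intro t _ ht
        simp [charM, ht.symm]
      · simp
    have hr : c i = c (rep (c i)) := (hrep (c i)).symm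
    rw [h1, h2, hLπ, ← hD _ _ hr, ← (hEP _ _ hr j).1, ← (hEP _ _ hr (c i)).1]
    simp only [hL']
    rw [Finset.sum_sub_distrib, Finset.sum_ite_eq]
    by_cases h : c i = j
    · subst h
      simp [Matrix.sub_apply, Matrix.sum_apply]
    · simp [h, Matrix.sum_apply]
  refine ⟨key, ?_⟩
  rintro _ ⟨_, ⟨x, rfl⟩, rfl⟩
  refine ⟨Lπ *ᵥ x, ?_⟩
  simp [Matrix.mulVec_mulVec, key]
end

section
/- Suppose L · P_π = P_π · L_π, where L_π ∈ ℝ^{(s·d)×(s·d)} has d×d blocks (L_π)_{ij}. Suppose there exist Q₁ ∈ ℝ^{q×q} with A·C = C·Q₁ and matrices Q'_{ij} ∈ ℝ^{q×q} (i, j ∈ Fin s) with B·K·(L_π)_{ij}·C = C·Q'_{ij} for all i, j. Let Q ∈ ℝ^{(s·q)×(s·q)} be the block matrix whose (i,j) block is (if i = j then Q₁ else 0) − Q'_{ij}. Then L̃ · P̃ = P̃ · Q, and consequently the column space of P̃ is invariant under the linear map x ↦ L̃.mulVec x. -/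
open Matrix

/-- Block diagonal matrix with `n` copies of `X` on the diagonal. -/
noncomputable def bdiag (n : ℕ) {d q : ℕ} (X : Matrix (Fin d) (Fin q) ℝ) :
    Matrix (Fin n × Fin d) (Fin n × Fin q) ℝ :=
  fun ia jb => if ia.1 = jb.1 then X ia.2 jb.2 else 0

/-- The `(i,j)` block of a block matrix. -/
noncomputable def blockOf {n s d e : ℕ} (L : Matrix (Fin n × Fin d) (Fin s × Fin e) ℝ)
    (i : Fin n) (j : Fin s) : Matrix (Fin d) (Fin e) ℝ :=
  fun a b => L (i, a) (j, b)

theorem aux_comm {n s d : ℕ} (c : Fin n → Fin s) (X : Matrix (Fin d) (Fin d) ℝ) :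
    bdiag n X * charM n s d c = charM n s d c * bdiag s X := by
  ext ⟨i, a⟩ ⟨j, b⟩
  simp [Matrix.mul_apply, Fintype.sum_prod_type, bdiag, charM, ite_and]
  rw [Finset.sum_eq_single i]
  · simp
  · intro x _ hx
    simp [Ne.symm hx]
  · simp

theorem aux_left {s d q : ℕ} {m : Type*} (X : Matrix (Fin d) (Fin q) ℝ)
    (M : Matrix (Fin s × Fin q) m ℝ) (i : Fin s) (a : Fin d) (j : m) :
    (bdiag s X * M) (i, a) j = ∑ k, X a k * M (i, k) j := by
  simp [Matrix.mul_apply, Fintype.sum_prod_type, bdiag]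

theorem aux_right {s d q : ℕ} {m : Type*} (X : Matrix (Fin d) (Fin q) ℝ)
    (M : Matrix m (Fin s × Fin d) ℝ) (i : m) (j : Fin s) (b : Fin q) :
    (M * bdiag s X) i (j, b) = ∑ k, M i (j, k) * X k b := by
  simp [Matrix.mul_apply, Fintype.sum_prod_type, bdiag]

/-- Lemma 2: if `L P_π = P_π L_π`, `A C = C Q₁` and `B K (L_π)_{ij} C = C Q'_{ij}`,
then `L̃ P̃ = P̃ Q` and the column space of `P̃` is `L̃`-invariant. -/
theorem lemma2_intertwining {n s d p q : ℕ}
    (c : Fin n → Fin s) (hc : Function.Surjective c)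
    (A : Matrix (Fin d) (Fin d) ℝ) (B : Matrix (Fin d) (Fin p) ℝ)
    (K : Matrix (Fin p) (Fin d) ℝ) (C : Matrix (Fin d) (Fin q) ℝ)
    (L : Matrix (Fin n × Fin d) (Fin n × Fin d) ℝ)
    (Lπ : Matrix (Fin s × Fin d) (Fin s × Fin d) ℝ)
    (hLP : L * charM n s d c = charM n s d c * Lπ)
    (Q₁ : Matrix (Fin q) (Fin q) ℝ)
    (hQ₁ : A * C = C * Q₁)
    (Q' : Fin s → Fin s → Matrix (Fin q) (Fin q) ℝ)
    (hQ' : ∀ i j, B * K * blockOf Lπ i j * C = C * Q' i j)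
    (Q : Matrix (Fin s × Fin q) (Fin s × Fin q) ℝ)
    (hQ : ∀ (i j : Fin s) (a b : Fin q),
      Q (i, a) (j, b) = ((if i = j then Q₁ else 0) - Q' i j) a b) :
    (bdiag n A - bdiag n (B * K) * L) * (charM n s d c * bdiag s C)
        = (charM n s d c * bdiag s C) * Q ∧
      Submodule.map (bdiag n A - bdiag n (B * K) * L).mulVecLin
          (LinearMap.range (charM n s d c * bdiag s C).mulVecLin)
        ≤ LinearMap.range (charM n s d c * bdiag s C).mulVecLin := by
  have key : bdiag s A * bdiag s C - bdiag s (B * K) * Lπ * bdiag s C = bdiag s C * Q := by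
    ext ⟨i, a⟩ ⟨j, b⟩
    have h1 := congrFun (congrFun (hQ' i j) a) b
    have h2 := congrFun (congrFun hQ₁ a) b
    rw [Matrix.mul_apply, Matrix.mul_apply] at h1 h2
    have h3 : ∀ k, (bdiag s (B * K) * Lπ) (i, a) (j, k) = (B * K * blockOf Lπ i j) a k := by
      intro k
      rw [aux_left, Matrix.mul_apply]
      rfl
    rw [Matrix.sub_apply, aux_left, aux_right, aux_left]
    simp only [h3, h1, hQ, Matrix.sub_apply, mul_sub, Finset.sum_sub_distrib]
    congr 1
    by_cases hij : i = j
    · simp [bdiag, hij, h2]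
    · simp [bdiag, hij]
  have main : (bdiag n A - bdiag n (B * K) * L) * (charM n s d c * bdiag s C)
        = (charM n s d c * bdiag s C) * Q := by
    rw [Matrix.mul_assoc (charM n s d c), ← key, Matrix.sub_mul, Matrix.mul_sub,
      ← Matrix.mul_assoc (bdiag n A), aux_comm, Matrix.mul_assoc (bdiag n (B * K)),
      ← Matrix.mul_assoc L, hLP, Matrix.mul_assoc (charM n s d c) Lπ,
      ← Matrix.mul_assoc (bdiag n (B * K)), aux_comm]
    simp only [Matrix.mul_assoc]
  refine ⟨main, ?_⟩
  rintro _ ⟨_, ⟨x, rfl⟩, rfl⟩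
  refine ⟨Q *ᵥ x, ?_⟩
  simp only [Matrix.mulVecLin_apply, Matrix.mulVec_mulVec, main]
end

section
/- Let L_g (g ∈ Fin t) be (n·d)×(n·d) real matrices (the Laplacians of the switching topologies), and set L̃_g = blockDiag_n(A) − blockDiag_n(B·K)·L_g. Suppose there is a single partition c : Fin n → Fin s (the least upper bound π_min of the equitable partitions of the subgraphs) such that for every g ∈ Fin t there exists a matrix Q_g ∈ ℝ^{(s·q)×(s·q)} with L̃_g · P̃ = P̃ · Q_g, and suppose every leader is a singleton cell. Define the subspace sequence 𝕎₁ = ⨆_{g} ⟨L̃_g | range(M̃.mulVecLin)⟩ and 𝕎_{i+1} = ⨆_{g} ⟨L̃_g | 𝕎_i⟩. Then 𝕎_i ⊆ range(P̃.mulVecLin) for every i ≥ 1; in particular dim 𝕎_i ≤ s·d, so the controllable set 𝒞 = 𝕎_N of the switched system satisfies dim 𝒞 ≤ card(π_min)·d. -/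
open Matrix

/-- Input matrix `M̃` with block `C` at position `(l,l)` for each leader `l ∈ Fin m`. -/
noncomputable def inputM (n m d q : ℕ) (h : m ≤ n) (C : Matrix (Fin d) (Fin q) ℝ) :
    Matrix (Fin n × Fin d) (Fin m × Fin q) ℝ :=
  fun ia lb => if ia.1 = Fin.castLE h lb.1 then C ia.2 lb.2 else 0

/-- `⟨F | S⟩`: the smallest `F`-invariant subspace containing `S`,
computed as `Σ_{k=0}^{N-1} F^k S` with `N = n·d`. -/
noncomputable def invHull {n d : ℕ} (F : Matrix (Fin n × Fin d) (Fin n × Fin d) ℝ)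
    (S : Submodule ℝ (Fin n × Fin d → ℝ)) : Submodule ℝ (Fin n × Fin d → ℝ) :=
  ⨆ k ∈ Finset.range (n * d), Submodule.map (F ^ k).mulVecLin S

theorem charM_mul_bdiag_apply {n s d q : ℕ} (c : Fin n → Fin s) (C : Matrix (Fin d) (Fin q) ℝ)
    (i : Fin n) (a : Fin d) (j : Fin s) (b : Fin q) :
    (charM n s d c * bdiag s C) (i, a) (j, b) = if c i = j then C a b else 0 := by
  rw [Matrix.mul_apply, Finset.sum_eq_single (c i, a)]
  · simp [charM, bdiag]
  · rintro ⟨x, y⟩ _ h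
    have : ¬ (c i = x ∧ a = y) := by
      rintro ⟨rfl, rfl⟩
      exact h rfl
    simp [charM, this]
  · simp

theorem range_inputM_le {n s d q m : ℕ} (hm : m ≤ n) (c : Fin n → Fin s)
    (C : Matrix (Fin d) (Fin q) ℝ)
    (hlead : ∀ l : Fin m, ∀ r : Fin n,
      c r = c (Fin.castLE hm l) → r = Fin.castLE hm l) :
    LinearMap.range (inputM n m d q hm C).mulVecLin ≤
      LinearMap.range (charM n s d c * bdiag s C).mulVecLin := by
  have h : inputM n m d q hm C = (charM n s d c * bdiag s C) *
      (1 : Matrix (Fin s × Fin q) (Fin s × Fin q) ℝ).submatrix id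
        (fun lb : Fin m × Fin q => (c (Fin.castLE hm lb.1), lb.2)) := by
    have h2 : inputM n m d q hm C = (charM n s d c * bdiag s C).submatrix id
        (fun lb : Fin m × Fin q => (c (Fin.castLE hm lb.1), lb.2)) := by
      ext ⟨i, a⟩ ⟨l, b⟩
      rw [Matrix.submatrix_apply, id, charM_mul_bdiag_apply]
      have : (i = Fin.castLE hm l) ↔ (c i = c (Fin.castLE hm l)) :=
        ⟨fun h => by rw [h], hlead l i⟩
      simp [inputM, this]
    rw [h2]
    ext x y
    simp [Matrix.mul_apply, Matrix.one_apply]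
  rw [h, Matrix.mulVecLin_mul]
  exact LinearMap.range_comp_le_range _ _

theorem invHull_le_range {n d : ℕ} {ι : Type} [Fintype ι]
    (F : Matrix (Fin n × Fin d) (Fin n × Fin d) ℝ)
    (P : Matrix (Fin n × Fin d) ι ℝ) (Q : Matrix ι ι ℝ) (h : F * P = P * Q)
    (S : Submodule ℝ (Fin n × Fin d → ℝ)) (hS : S ≤ LinearMap.range P.mulVecLin) :
    invHull F S ≤ LinearMap.range P.mulVecLin := by
  classical
  have hk : ∀ k : ℕ, F ^ k * P = P * Q ^ k := by
    intro k
    induction k with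
    | zero => simp
    | succ k ih => rw [pow_succ, Matrix.mul_assoc, h, ← Matrix.mul_assoc, ih, Matrix.mul_assoc,
        ← pow_succ]
  refine iSup₂_le fun k _ => ?_
  rintro _ ⟨v, hv, rfl⟩
  obtain ⟨w, rfl⟩ := hS hv
  refine ⟨(Q ^ k) *ᵥ w, ?_⟩
  simp [Matrix.mulVec_mulVec, hk]

/-- Theorem 2: for the switched system, each member of the subspace sequence `𝕎_i`
is contained in the column space of `P̃`; in particular its dimension is at most
`card(π_min) · d = s · d`, so the controllable set `𝒞 = 𝕎_N` has dimension at most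
`s · d`. -/
theorem theorem2_switching {n s d p q m t : ℕ} (hm : m ≤ n)
    (c : Fin n → Fin s) (hc : Function.Surjective c)
    (A : Matrix (Fin d) (Fin d) ℝ) (B : Matrix (Fin d) (Fin p) ℝ)
    (K : Matrix (Fin p) (Fin d) ℝ) (C : Matrix (Fin d) (Fin q) ℝ)
    (Lg : Fin t → Matrix (Fin n × Fin d) (Fin n × Fin d) ℝ)
    (Qg : Fin t → Matrix (Fin s × Fin q) (Fin s × Fin q) ℝ)
    (hQg : ∀ g, (bdiag n A - bdiag n (B * K) * Lg g) * (charM n s d c * bdiag s C)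
      = (charM n s d c * bdiag s C) * Qg g)
    (hlead : ∀ l : Fin m, ∀ r : Fin n,
      c r = c (Fin.castLE hm l) → r = Fin.castLE hm l)
    (𝕎 : ℕ → Submodule ℝ (Fin n × Fin d → ℝ))
    (h𝕎1 : 𝕎 1 = ⨆ g : Fin t, invHull (bdiag n A - bdiag n (B * K) * Lg g)
      (LinearMap.range (inputM n m d q hm C).mulVecLin))
    (h𝕎succ : ∀ i, 1 ≤ i →
      𝕎 (i + 1) = ⨆ g : Fin t, invHull (bdiag n A - bdiag n (B * K) * Lg g) (𝕎 i)) :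
    ∀ i, 1 ≤ i →
      𝕎 i ≤ LinearMap.range (charM n s d c * bdiag s C).mulVecLin ∧
      Module.finrank ℝ (𝕎 i) ≤ s * d := by
  have key : ∀ i, 1 ≤ i → 𝕎 i ≤ LinearMap.range (charM n s d c * bdiag s C).mulVecLin := by
    intro i hi
    induction i, hi using Nat.le_induction with
    | base =>
      rw [h𝕎1]
      exact iSup_le fun g => invHull_le_range _ _ _ (hQg g) _ (range_inputM_le hm c C hlead)
    | succ i hi ih =>
      rw [h𝕎succ i hi]
      exact iSup_le fun g => invHull_le_range _ _ _ (hQg g) _ ih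
  intro i hi
  refine ⟨key i hi, (Submodule.finrank_mono (key i hi)).trans ?_⟩
  have h1 := Matrix.rank_mul_le_left (charM n s d c) (bdiag s C)
  have h2 := Matrix.rank_le_card_width (charM n s d c)
  have h3 := h1.trans h2
  simpa [Matrix.rank] using h3
end

section
/- (Heterogeneous version of Lemma 2.) Let A : Fin n → ℝ^{d×d} and B : Fin n → ℝ^{d×p} with A i = A j and B i = B j whenever c i = c j (agents in the same cell have the same dynamics), and let L̃' be the (n·d)×(n·d) block matrix whose (i,j) block is (if i = j then A i else 0) − (B i)·K·L_{ij}, where L_{ij} denotes the (i,j) d×d block of L. Suppose L · P_π = P_π · L_π; suppose there exist Q'_i ∈ ℝ^{q×q} (i ∈ Fin s) with (A r)·C = C·Q'_{c r} for every r ∈ Fin n, and Q''_{ij} ∈ ℝ^{q×q} (i, j ∈ Fin s) with (B r)·K·(L_π)_{c r, j}·C = C·Q''_{c r, j} for every r ∈ Fin n and j ∈ Fin s. Let Q' ∈ ℝ^{(s·q)×(s·q)} be the block matrix whose (i,j) block is (if i = j then Q'_i else 0) − Q''_{ij}. Then L̃' · P̃ = P̃ · Q', and consequently the column space of P̃ is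 invariant under the linear map x ↦ L̃'.mulVec x. -/
open Matrix

theorem blockOf_mul' {n m s d e f : ℕ} (M : Matrix (Fin n × Fin d) (Fin m × Fin e) ℝ)
    (N : Matrix (Fin m × Fin e) (Fin s × Fin f) ℝ) (i : Fin n) (k : Fin s) :
    blockOf (M * N) i k = ∑ j, blockOf M i j * blockOf N j k := by
  ext a b
  simp [blockOf, Matrix.mul_apply, Matrix.sum_apply, Fintype.sum_prod_type]

theorem blockOf_charM' {n s d : ℕ} (c : Fin n → Fin s) (i : Fin n) (k : Fin s) :
    blockOf (charM n s d c) i k = if c i = k then 1 else 0 := by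
  ext a b
  by_cases h : c i = k <;> simp [blockOf, charM, h, Matrix.one_apply]

theorem blockOf_bdiag' {n d q : ℕ} (X : Matrix (Fin d) (Fin q) ℝ) (i k : Fin n) :
    blockOf (bdiag n X) i k = if i = k then X else 0 := by
  ext a b
  by_cases h : i = k <;> simp [blockOf, bdiag, h]

theorem blockOf_ext' {n s d e : ℕ} {M N : Matrix (Fin n × Fin d) (Fin s × Fin e) ℝ}
    (h : ∀ i k, blockOf M i k = blockOf N i k) : M = N := by
  ext ⟨i, a⟩ ⟨k, b⟩
  exact congrFun (congrFun (h i k) a) b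

/-- Lemma 3 (heterogeneous version of Lemma 2): agents in the same cell have the same
dynamics; under the corresponding intertwining conditions, `L̃' P̃ = P̃ Q'` and the
column space of `P̃` is `L̃'`-invariant. -/
theorem lemma3_heterogeneous {n s d p q : ℕ}
    (c : Fin n → Fin s) (hc : Function.Surjective c)
    (A : Fin n → Matrix (Fin d) (Fin d) ℝ) (B : Fin n → Matrix (Fin d) (Fin p) ℝ)
    (hA : ∀ i j, c i = c j → A i = A j)
    (hB : ∀ i j, c i = c j → B i = B j)
    (K : Matrix (Fin p) (Fin d) ℝ) (C : Matrix (Fin d) (Fin q) ℝ)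
    (L : Matrix (Fin n × Fin d) (Fin n × Fin d) ℝ)
    (Lπ : Matrix (Fin s × Fin d) (Fin s × Fin d) ℝ)
    (hLP : L * charM n s d c = charM n s d c * Lπ)
    (L' : Matrix (Fin n × Fin d) (Fin n × Fin d) ℝ)
    (hL' : ∀ (i j : Fin n) (a b : Fin d),
      L' (i, a) (j, b) = ((if i = j then A i else 0) - B i * K * blockOf L i j) a b)
    (Q₁ : Fin s → Matrix (Fin q) (Fin q) ℝ)
    (hQ₁ : ∀ r : Fin n, A r * C = C * Q₁ (c r))
    (Q₂ : Fin s → Fin s → Matrix (Fin q) (Fin q) ℝ)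
    (hQ₂ : ∀ (r : Fin n) (j : Fin s),
      B r * K * blockOf Lπ (c r) j * C = C * Q₂ (c r) j)
    (Q' : Matrix (Fin s × Fin q) (Fin s × Fin q) ℝ)
    (hQ' : ∀ (i j : Fin s) (a b : Fin q),
      Q' (i, a) (j, b) = ((if i = j then Q₁ i else 0) - Q₂ i j) a b) :
    L' * (charM n s d c * bdiag s C) = (charM n s d c * bdiag s C) * Q' ∧
      Submodule.map L'.mulVecLin
          (LinearMap.range (charM n s d c * bdiag s C).mulVecLin)
        ≤ LinearMap.range (charM n s d c * bdiag s C).mulVecLin := by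
  have hP : ∀ i k, blockOf (charM n s d c * bdiag s C) i k = if c i = k then C else 0 := by
    intro i k
    rw [blockOf_mul']
    simp only [blockOf_charM', blockOf_bdiag']
    rw [Finset.sum_eq_single (c i) (by intro j _ hj; simp [Ne.symm hj]) (by simp)]
    simp
  have hL : ∀ i k, ∑ j, blockOf L i j * (if c j = k then (1 : Matrix (Fin d) (Fin d) ℝ) else 0)
      = blockOf Lπ (c i) k := by
    intro i k
    have h := congrArg (fun M => blockOf M i k) hLP
    simp only [blockOf_mul', blockOf_charM'] at h
    rw [h]
    simp
  have hLb : ∀ i j, blockOf L' i j = (if i = j then A i else 0) - B i * K * blockOf L i j := by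
    intro i j
    ext a b
    exact hL' i j a b
  have hQb : ∀ i j, blockOf Q' i j = (if i = j then Q₁ i else 0) - Q₂ i j := by
    intro i j
    ext a b
    exact hQ' i j a b
  have main : L' * (charM n s d c * bdiag s C) = (charM n s d c * bdiag s C) * Q' := by
    apply blockOf_ext'
    intro i k
    rw [blockOf_mul', blockOf_mul']
    simp only [hP, hLb, hQb]
    have e1 : ∀ j, (if c j = k then C else 0)
        = (if c j = k then (1 : Matrix (Fin d) (Fin d) ℝ) else 0) * C := by
      intro j
      split_ifs <;> simp
    have e2 : ∑ j, (B i * K * blockOf L i j) * (if c j = k then C else 0)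
        = C * Q₂ (c i) k := by
      rw [← hQ₂, ← hL, Matrix.mul_sum, Matrix.sum_mul]
      refine Finset.sum_congr rfl fun j _ => ?_
      rw [e1]
      simp only [Matrix.mul_assoc]
    simp only [Matrix.sub_mul, Matrix.mul_sub, Finset.sum_sub_distrib]
    rw [e2]
    rw [Finset.sum_eq_single i (by intro j _ hj; simp [Ne.symm hj]) (by simp),
      Finset.sum_eq_single (c i) (by intro j _ hj; simp [Ne.symm hj]) (by simp),
      Finset.sum_eq_single (c i) (by intro j _ hj; simp [Ne.symm hj]) (by simp)]
    by_cases h : c i = k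
    · simp [h, hQ₁]
    · simp [h]
  refine ⟨main, ?_⟩
  rintro _ ⟨_, ⟨x, rfl⟩, rfl⟩
  refine ⟨Q' *ᵥ x, ?_⟩
  simp only [Matrix.mulVecLin_apply, Matrix.mulVec_mulVec, main]
end

section
/- Let L̃_g (g ∈ Fin t) be (n·d)×(n·d) real matrices and M̃ an (n·d)×(m·q) real matrix, and let L̃* = Σ_{g} L̃_g (the system matrix of the union graph, since Σ_g (blockDiag_n(A) − blockDiag_n(B·K)·L_g) = t·blockDiag_n(A) − blockDiag_n(B·K)·Σ_g L_g). If the union-graph pair (L̃*, M̃) is controllable, i.e. ⨆_{k=0}^{n·d−1} range((L̃*^k · M̃).mulVecLin) = ⊤, then the switched system is controllable: every subspace S ⊆ ℝ^{n·d} that contains range(M̃.mulVecLin) and satisfies S.map(L̃_g.mulVecLin) ≤ S for every g ∈ Fin t must equal ⊤ (equivalently, the smallest subspace containing the columns of M̃ and invariant under every L̃_g — the controllable set of the switched system, i.e. the column span of the matrix W̃_c of all products L̃_{g₁}^{k₁}⋯L̃_{g_j}^{k_j}·M̃ — is all of ℝ^{n·d}). -/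
open Matrix

/-- Theorem 4: if the union-graph pair `(L̃* = Σ_g L̃_g, M̃)` is controllable, then the
switched system is controllable: the only subspace containing the columns of `M̃` and
invariant under every `L̃_g` is the whole space. -/
theorem theorem4_union_implies_switched {n d m q t : ℕ}
    (Ltil : Fin t → Matrix (Fin n × Fin d) (Fin n × Fin d) ℝ)
    (Mtil : Matrix (Fin n × Fin d) (Fin m × Fin q) ℝ)
    (hctrb : (⨆ k ∈ Finset.range (n * d),
        LinearMap.range (((∑ g, Ltil g) ^ k * Mtil).mulVecLin)) = ⊤) :
    ∀ S : Submodule ℝ (Fin n × Fin d → ℝ),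
      LinearMap.range Mtil.mulVecLin ≤ S →
      (∀ g, Submodule.map (Ltil g).mulVecLin S ≤ S) →
      S = ⊤ := by
  intro S hM hL
  have key : ∀ (k : ℕ) (x : Fin m × Fin q → ℝ),
      ((∑ g, Ltil g) ^ k * Mtil) *ᵥ x ∈ S := by
    intro k x
    induction k with
    | zero =>
      rw [pow_zero, Matrix.one_mul]
      exact hM ⟨x, rfl⟩
    | succ k ih =>
      rw [pow_succ', Matrix.mul_assoc, ← Matrix.mulVec_mulVec, Matrix.sum_mulVec]
      exact S.sum_mem fun g _ => hL g ⟨_, ih, rfl⟩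
  rw [eq_top_iff, ← hctrb]
  refine iSup₂_le fun k _ => ?_
  rintro _ ⟨x, rfl⟩
  exact key k x
end
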